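/- Let A and B be 4×4 matrices with entries in R, with two-spin tensor components a_{κ,λ} and b_{κ,λ}. Then for all l,m ∈ {1,2,3}, the entangled dyadic component of the commutator satisfies Tr((σ_l ⊗ σ_m) [A,B]) = (1/4)[ [a_{0,0}, b_{l,m}] + [a_{0,m}, b_{l,0}] + [a_{l,0}, b_{0,m}] + [a_{l,m}, b_{0,0}] + i ε_{m m₁ m₂}( {a_{0,m₁}, b_{l,m₂}} + {a_{l,m₁}, b_{0,m₂}} ) + i ε_{l l₁ l₂}( {a_{l₁,0}, b_{l₂,m}} + {a_{l₁,m}, b_{l₂,0}} ) − ε_{l l₁ l₂} ε_{m m₁ m₂} [a_{l₁,m₁}, b_{l₂,m₂}] ]; in particular the doubly entangled torque term carrying two Levi-Civita symbols is again a commutator of components. -/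

import Mathlib

/-!
By completeness of the Pauli matrices, `Tr (X Y) = ½ ∑_κ Tr (σ_κ X) Tr (σ_κ Y)`. Replacing `X` by
`σ_l X` and using `σ_k σ_l = δ_{kl} + i ∑_j ε_{klj} σ_j` expresses the components of `X Y` through
those of `X` and `Y` over any `ℂ`-algebra, in particular over the `2 × 2` matrices over `R`.
A two-spin matrix is a one-spin matrix whose entries are one-spin matrices, so two applications of
the one-spin law give the components of `A B`. In the commutator, each Levi-Civita symbol
contributes one sign under exchange of `A` and `B`.
-/

open Matrix Kronecker

/-- The Pauli matrices `σ₀ = I₂, σ₁, σ₂, σ₃`, with complex entries regarded as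
elements of an associative unital `ℂ`-algebra `R` via the algebra map. -/
noncomputable def pauli (R : Type*) [Ring R] [Algebra ℂ R] : Fin 4 → Matrix (Fin 2) (Fin 2) R
  | 0 => !![1, 0; 0, 1]
  | 1 => !![0, 1; 1, 0]
  | 2 => !![0, -(algebraMap ℂ R Complex.I); algebraMap ℂ R Complex.I, 0]
  | 3 => !![1, 0; 0, -1]

/-- The Levi-Civita symbol `ε_{ijk}` on indices in `{1,2,3}` (represented by `Fin 3`). -/
def eps (i j k : Fin 3) : ℤ :=
  ((j.val : ℤ) - i.val) * ((k.val : ℤ) - i.val) * ((k.val : ℤ) - j.val) / 2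

section KroneckerTrace

variable {K R m n : Type*} [CommSemiring K] [Semiring R] [Algebra K R] [Fintype m] [Fintype n]

theorem trace_map_algebraMap_mul (P : Matrix m m K) (X : Matrix m m R) :
    (P.map (algebraMap K R) * X).trace = ∑ i, ∑ j, P i j • X j i := by
  simp only [trace, diag_apply, mul_apply, map_apply, ← Algebra.smul_def]

theorem trace_map_kronecker_map_mul [DecidableEq n] (P : Matrix m m K) (Q : Matrix n n K)
    (A : Matrix (m × n) (m × n) R) :
    ((P.map (algebraMap K R) ⊗ₖ Q.map (algebraMap K R)) * A).trace =
      (Q.map (algebraMap K R) *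
        (P.map (algebraMap K (Matrix n n R)) * (comp m m n n R).symm A).trace).trace := by
  have map_kronecker :
      P.map (algebraMap K R) ⊗ₖ Q.map (algebraMap K R) = (P ⊗ₖ Q).map (algebraMap K R) := by
    ext
    simp
  simp only [map_kronecker, trace_map_algebraMap_mul, Fintype.sum_prod_type, kroneckerMap_apply,
    Matrix.sum_apply, Matrix.smul_apply, comp_symm_apply, Finset.smul_sum, smul_smul]
  calc ∑ i, ∑ k, ∑ j, ∑ l, (P i j * Q k l) • A (j, l) (i, k)
      = ∑ k, ∑ i, ∑ l, ∑ j, (P i j * Q k l) • A (j, l) (i, k) := by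
        rw [Finset.sum_comm]
        simp only [Finset.sum_comm (s := (Finset.univ : Finset m)) (t := (Finset.univ : Finset n))]
    _ = ∑ k, ∑ l, ∑ i, ∑ j, (Q k l * P i j) • A (j, l) (i, k) := by
        simp only [mul_comm]
        exact Finset.sum_congr rfl fun _ _ => Finset.sum_comm

end KroneckerTrace

theorem eps_rotate (i j k : Fin 3) : eps j k i = eps i j k := by
  decide +revert

theorem eps_eq_ite_sub_ite (i j k : Fin 3) :
    eps i j k = (if j = i + 1 ∧ k = i + 2 then 1 else 0) -
      (if j = i + 2 ∧ k = i + 1 then 1 else 0) := by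
  decide +revert

theorem sum_sum_eps_smul {M : Type*} [AddCommGroup M] (i : Fin 3) (f : Fin 3 → Fin 3 → M) :
    ∑ j, ∑ k, eps i j k • f j k = f (i + 1) (i + 2) - f (i + 2) (i + 1) := by
  simp [eps_eq_ite_sub_ite, sub_smul, ite_and]

section PauliComponents

variable {R : Type*} [Ring R] [Algebra ℂ R]

theorem pauli_zero : pauli R 0 = 1 := one_fin_two.symm

theorem pauli_map_algebraMap (κ : Fin 4) : (pauli ℂ κ).map (algebraMap ℂ R) = pauli R κ := by
  ext i j
  fin_cases κ <;> fin_cases i <;> fin_cases j <;> simp [pauli]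

theorem pauli_succ_mul_pauli_succ (k l : Fin 3) :
    pauli R k.succ * pauli R l.succ =
      (if k = l then 1 else 0) + Complex.I • ∑ j, eps k l j • pauli R j.succ := by
  fin_cases k <;> fin_cases l <;> ext i j <;> fin_cases i <;> fin_cases j <;>
    simp [pauli, eps, Fin.sum_univ_three, Algebra.algebraMap_eq_smul_one, smul_smul]

/-- The Fierz completeness relation of the Pauli matrices, contracted with `X` and `Y`. -/
theorem trace_mul_eq_sum_trace_pauli (X Y : Matrix (Fin 2) (Fin 2) R) :
    (X * Y).trace = (1 / 2 : ℂ) • ∑ κ, (pauli R κ * X).trace * (pauli R κ * Y).trace := by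
  simp only [Fin.sum_univ_four, trace_fin_two, mul_apply, Fin.sum_univ_two, pauli, of_apply,
    cons_val', cons_val_zero, cons_val_one, cons_val_fin_one, Algebra.algebraMap_eq_smul_one]
  simp only [zero_mul, one_mul, neg_mul, mul_neg, zero_add, add_zero, mul_add, add_mul,
    smul_mul_assoc, mul_smul_comm, smul_add, smul_neg, smul_smul, Complex.I_mul_I]
  module

/-- The one-spin component `Tr (σ_κ X)` of a `2 × 2` matrix, as a `ℂ`-linear map in `X`. -/
noncomputable def spinComponent (κ : Fin 4) : Matrix (Fin 2) (Fin 2) R →ₗ[ℂ] R :=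
  traceLinearMap (Fin 2) ℂ R ∘ₗ LinearMap.mulLeft ℂ (pauli R κ)

/-- The two-spin tensor component `Tr ((σ_κ ⊗ σ_μ) A)`, as a `ℂ`-linear map in `A`. -/
noncomputable def twoSpinComponent (κ μ : Fin 4) :
    Matrix (Fin 2 × Fin 2) (Fin 2 × Fin 2) R →ₗ[ℂ] R :=
  traceLinearMap (Fin 2 × Fin 2) ℂ R ∘ₗ LinearMap.mulLeft ℂ (pauli R κ ⊗ₖ pauli R μ)

theorem spinComponent_apply (κ : Fin 4) (X : Matrix (Fin 2) (Fin 2) R) :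
    spinComponent κ X = (pauli R κ * X).trace := rfl

theorem twoSpinComponent_apply (κ μ : Fin 4) (A : Matrix (Fin 2 × Fin 2) (Fin 2 × Fin 2) R) :
    twoSpinComponent κ μ A = ((pauli R κ ⊗ₖ pauli R μ) * A).trace := rfl

theorem spinComponent_zero (X : Matrix (Fin 2) (Fin 2) R) : spinComponent 0 X = X.trace := by
  rw [spinComponent_apply, pauli_zero, one_mul]

theorem spinComponent_succ_pauli_succ_mul (k l : Fin 3) (X : Matrix (Fin 2) (Fin 2) R) :
    spinComponent k.succ (pauli R l.succ * X) =
      (if k = l then spinComponent 0 X else 0) +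
        Complex.I • ∑ j, eps l j k • spinComponent j.succ X := by
  rw [spinComponent_apply, ← mul_assoc, pauli_succ_mul_pauli_succ, spinComponent_zero]
  simp only [add_mul, ite_mul, one_mul, zero_mul, trace_add, apply_ite trace, trace_zero,
    smul_mul_assoc, trace_smul, Finset.sum_mul, trace_sum, ← spinComponent_apply, eps_rotate]

theorem spinComponent_succ_mul (l : Fin 3) (X Y : Matrix (Fin 2) (Fin 2) R) :
    spinComponent l.succ (X * Y) =
      (1 / 2 : ℂ) • (spinComponent 0 X * spinComponent l.succ Y
        + spinComponent l.succ X * spinComponent 0 Y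
        + Complex.I • ∑ j, ∑ k, eps l j k • (spinComponent j.succ X * spinComponent k.succ Y)) := by
  rw [spinComponent_apply, ← mul_assoc, trace_mul_eq_sum_trace_pauli]
  simp only [← spinComponent_apply]
  rw [Fin.sum_univ_succ, spinComponent_zero (_ * X), ← spinComponent_apply]
  simp only [spinComponent_succ_pauli_succ_mul, add_mul, Finset.sum_add_distrib, ite_mul, zero_mul,
    Finset.sum_ite_eq', Finset.mem_univ, if_true, smul_mul_assoc, Finset.sum_mul,
    ← Finset.smul_sum]
  rw [Finset.sum_comm]
  module

theorem twoSpinComponent_eq_spinComponent_spinComponent (κ μ : Fin 4)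
    (A : Matrix (Fin 2 × Fin 2) (Fin 2 × Fin 2) R) :
    twoSpinComponent κ μ A =
      spinComponent μ (spinComponent κ ((compRingEquiv (Fin 2) (Fin 2) R).symm A)) := by
  simpa only [pauli_map_algebraMap, compRingEquiv_symm_apply, twoSpinComponent_apply,
    spinComponent_apply] using trace_map_kronecker_map_mul (pauli ℂ κ) (pauli ℂ μ) A

theorem twoSpinComponent_succ_succ_mul (A B : Matrix (Fin 2 × Fin 2) (Fin 2 × Fin 2) R)
    (l m : Fin 3) :
    let a := fun κ μ => twoSpinComponent κ μ A
    let b := fun κ μ => twoSpinComponent κ μ B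
    twoSpinComponent l.succ m.succ (A * B) =
      (1 / 4 : ℂ) •
        (a 0 0 * b l.succ m.succ + a 0 m.succ * b l.succ 0
          + a l.succ 0 * b 0 m.succ + a l.succ m.succ * b 0 0
          + Complex.I • ∑ m₁, ∑ m₂, eps m m₁ m₂ •
              (a 0 m₁.succ * b l.succ m₂.succ + a l.succ m₁.succ * b 0 m₂.succ)
          + Complex.I • ∑ l₁, ∑ l₂, eps l l₁ l₂ •
              (a l₁.succ 0 * b l₂.succ m.succ + a l₁.succ m.succ * b l₂.succ 0)
          - ∑ l₁, ∑ l₂, eps l l₁ l₂ • ∑ m₁, ∑ m₂, eps m m₁ m₂ •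
              (a l₁.succ m₁.succ * b l₂.succ m₂.succ)) := by
  simp only [twoSpinComponent_eq_spinComponent_spinComponent, map_mul, spinComponent_succ_mul,
    sum_sum_eps_smul, map_smul, map_add, map_sub]
  have I_smul_I_smul (x : R) : Complex.I • Complex.I • x = -x := by
    rw [smul_smul, Complex.I_mul_I, neg_one_smul]
  simp only [smul_add, smul_sub, smul_comm Complex.I (1 / 2 : ℂ), I_smul_I_smul]
  module

end PauliComponents

/-- Entangled dyadic component of the commutator of two 4×4 matrices over a `ℂ`-algebra:
single-Levi-Civita torque terms are anticommutators of components, and the doubly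
entangled torque term with two Levi-Civita symbols is again a commutator. -/
theorem two_spin_commutator_dyadic (R : Type*) [Ring R] [Algebra ℂ R]
    (A B : Matrix (Fin 2 × Fin 2) (Fin 2 × Fin 2) R) (a b : Fin 4 → Fin 4 → R)
    (ha : ∀ κ μ : Fin 4, a κ μ = ((pauli R κ ⊗ₖ pauli R μ) * A).trace)
    (hb : ∀ κ μ : Fin 4, b κ μ = ((pauli R κ ⊗ₖ pauli R μ) * B).trace) :
    ∀ l m : Fin 3,
      ((pauli R l.succ ⊗ₖ pauli R m.succ) * (A * B - B * A)).trace =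
        (1/4 : ℂ) •
          ((a 0 0 * b l.succ m.succ - b l.succ m.succ * a 0 0)
            + (a 0 m.succ * b l.succ 0 - b l.succ 0 * a 0 m.succ)
            + (a l.succ 0 * b 0 m.succ - b 0 m.succ * a l.succ 0)
            + (a l.succ m.succ * b 0 0 - b 0 0 * a l.succ m.succ)
            + algebraMap ℂ R Complex.I *
                ∑ m₁ : Fin 3, ∑ m₂ : Fin 3,
                  ((eps m m₁ m₂ : ℤ) : R) *
                    ((a 0 m₁.succ * b l.succ m₂.succ + b l.succ m₂.succ * a 0 m₁.succ)
                      + (a l.succ m₁.succ * b 0 m₂.succ + b 0 m₂.succ * a l.succ m₁.succ))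
            + algebraMap ℂ R Complex.I *
                ∑ l₁ : Fin 3, ∑ l₂ : Fin 3,
                  ((eps l l₁ l₂ : ℤ) : R) *
                    ((a l₁.succ 0 * b l₂.succ m.succ + b l₂.succ m.succ * a l₁.succ 0)
                      + (a l₁.succ m.succ * b l₂.succ 0 + b l₂.succ 0 * a l₁.succ m.succ))
            - ∑ l₁ : Fin 3, ∑ l₂ : Fin 3, ∑ m₁ : Fin 3, ∑ m₂ : Fin 3,
                ((eps l l₁ l₂ : ℤ) : R) * ((eps m m₁ m₂ : ℤ) : R) *
                  (a l₁.succ m₁.succ * b l₂.succ m₂.succ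
                    - b l₂.succ m₂.succ * a l₁.succ m₁.succ)) := by
  intro l m
  obtain rfl : a = fun κ μ => twoSpinComponent κ μ A := funext₂ ha
  obtain rfl : b = fun κ μ => twoSpinComponent κ μ B := funext₂ hb
  rw [← twoSpinComponent_apply, map_sub, twoSpinComponent_succ_succ_mul,
    twoSpinComponent_succ_succ_mul]
  -- Exchanging `A` and `B` swaps the two terms of each expanded Levi-Civita sum, so commutators
  -- remain where the number of symbols is even and anticommutators where it is odd.
  simp only [mul_assoc]
  simp only [← Algebra.smul_def, ← zsmul_eq_mul, ← Finset.smul_sum, sum_sum_eps_smul]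
  module
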